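/- Let m ≥ 2 and let η = e^{πi/m}, ζ = e^{2πi/m}. Define the oriented chain W(π/m) = H(π/m) − H(−π/m) in C, where H(θ) is the ray R_{≥0}·e^{iθ} oriented away from the origin. For β ∈ C with β^m = −1, let Λ_β ⊂ C^2 be the line z' = βz. Then the local intersection number at the origin of the 2-chain W(π/m) × W(π/m) with Λ_β equals 1 if β = η, equals −1 if β = η^{-1}, and equals 0 otherwise. -/

import Mathlib

open scoped Classical

/-!
Fix the first ray of `W × W`, with direction `u`. Its image under `z ↦ βz + c` is a path leaving `c`
in the direction `w = βu`, and the intersection points on this part of the chain are the crossings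
of the path with the rays of `W`, signed by their sense. Along the path the argument runs
monotonically through less than `π`, from a value `γ` at `c` to the value `ω` of the argument of
`w`; hence the signed number of crossings with the ray of argument `θ` is
`⌊(ω - θ) / 2π⌋ - ⌊(γ - θ) / 2π⌋`. Subtracting this for `θ = ±π/m` gives a term depending only
on `c`, which cancels between the two choices `u = η` and `u = η⁻¹`, minus a term depending only on
`w`, which for an `m`-th root of unity `w` is `1` if `w = 1` and `0` otherwise. Finally `βη = 1` and
`βη⁻¹ = 1` single out `β = η⁻¹` and `β = η`.
-/

section

open Complex Set Function
open scoped Real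

attribute [local instance] Complex.finrank_real_complex_fact

local notation "𝓐" => Orientation.areaForm Complex.orientation

/-- The closed ray `ℝ_{≥0} u` from the origin. -/
def ray (u : ℂ) : Set ℂ := {z | ∃ r : ℝ, 0 ≤ r ∧ z = r * u}

/-- The ray `ℝ_{>0} u`, without its end point if `u ≠ 0`. -/
def openRay (u : ℂ) : Set ℂ := {z | ∃ r : ℝ, 0 < r ∧ z = r * u}

lemma openRay_subset_ray (u : ℂ) : openRay u ⊆ ray u :=
  fun _ ⟨r, hr, hz⟩ => ⟨r, hr.le, hz⟩

lemma zero_mem_ray (u : ℂ) : 0 ∈ ray u :=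
  ⟨0, le_rfl, by simp⟩

lemma mem_openRay_of_mem_ray {u z : ℂ} (hz : z ∈ ray u) (hz₀ : z ≠ 0) : z ∈ openRay u := by
  obtain ⟨r, hr, rfl⟩ := hz
  exact ⟨r, hr.lt_of_ne' (by rintro rfl; simp at hz₀), rfl⟩

lemma disjoint_ray_exp_openRay_inv {θ : ℝ} (hθ : 0 < Real.sin θ) :
    Disjoint (ray (exp (θ * I))) (openRay (exp (θ * I))⁻¹) := by
  rw [Set.disjoint_left]
  rintro _ ⟨r, hr, rfl⟩ ⟨s, hs, h⟩
  have him : r * Real.sin θ = -(s * Real.sin θ) := by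
    simpa [← exp_neg, ← neg_mul, ← ofReal_neg, exp_ofReal_mul_I_im] using congrArg im h
  linarith [mul_nonneg hr hθ.le, mul_pos hs hθ]

lemma ite_mem_ray_eq_vecCons {α : Type*} {a b z : ℂ} (h : Disjoint (ray a) (openRay b))
    {i : Fin 2} (hz : z ∈ openRay (![a, b] i)) (x y : α) :
    (if z ∈ ray a then x else y) = ![x, y] i := by
  fin_cases i
  · exact if_pos (openRay_subset_ray a hz)
  · exact if_neg (Set.disjoint_right.mp h hz)

lemma pairwise_disjoint_openRay_vecCons {a b : ℂ} (h : Disjoint (ray a) (openRay b)) :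
    Pairwise (Disjoint on fun i => openRay (![a, b] i)) := by
  have hab : Disjoint (openRay a) (openRay b) := h.mono_left (openRay_subset_ray a)
  intro i j hij
  fin_cases i <;> fin_cases j <;> first | exact absurd rfl hij | exact hab | exact hab.symm

/-- The signed number of crossings of the path `r ↦ c + r w`, `0 < r`, with `openRay v`, counted
positively where the path crosses counterclockwise. Parallel rays count as not crossing,
since `Real.sign 0 = 0`. -/
noncomputable def rayCrossing (c w v : ℂ) : ℝ :=
  if ∃ r s : ℝ, 0 < r ∧ 0 < s ∧ (s : ℂ) * v = r * w + c then
    Real.sign (𝓐 v w) else 0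

lemma areaForm_eq (z w : ℂ) : 𝓐 z w = z.re * w.im - z.im * w.re := by
  simp [Complex.areaForm, sub_eq_add_neg]

lemma areaForm_exp_exp (x y : ℝ) :
    𝓐 (exp (x * I)) (exp (y * I)) = Real.sin (y - x) := by
  rw [areaForm_eq]
  simp only [exp_ofReal_mul_I_re, exp_ofReal_mul_I_im, Real.sin_sub]
  ring

-- Cramer's rule: pair `s v = r w + c` with `v` and with `w`.
lemma mul_eq_mul_add_iff_areaForm {c w v : ℂ} (hvw : 𝓐 v w ≠ 0) {r s : ℝ} :
    (s : ℂ) * v = r * w + c ↔ r * 𝓐 v w = 𝓐 c v ∧ s * 𝓐 v w = 𝓐 c w := by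
  simp only [areaForm_eq, Complex.ext_iff, add_re, add_im, re_ofReal_mul, im_ofReal_mul] at hvw ⊢
  constructor
  · rintro ⟨hre, him⟩
    constructor
    · linear_combination v.im * hre - v.re * him
    · linear_combination w.im * hre - w.re * him
  · rintro ⟨hr, hs⟩
    constructor <;> apply mul_right_cancel₀ hvw
    · linear_combination v.re * hs - w.re * hr
    · linear_combination v.im * hs - w.im * hr

lemma pos_iff_of_mul_eq {r a b : ℝ} (ha : a ≠ 0) (h : r * a = b) : 0 < r ↔ 0 < a * b := by
  rw [← h, mul_left_comm, mul_pos_iff_of_pos_right (mul_self_pos.mpr ha)]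

lemma rayCrossing_eq_ite_areaForm (c w v : ℂ) :
    rayCrossing c w v =
      if 0 < 𝓐 v w * 𝓐 c v ∧ 0 < 𝓐 v w * 𝓐 c w then Real.sign (𝓐 v w) else 0 := by
  by_cases hvw : 𝓐 v w = 0
  · simp [rayCrossing, hvw]
  refine if_congr ⟨?_, fun ⟨hr, hs⟩ => ?_⟩ rfl rfl
  · rintro ⟨r, s, hr, hs, h⟩
    obtain ⟨hr', hs'⟩ := (mul_eq_mul_add_iff_areaForm hvw).mp h
    exact ⟨(pos_iff_of_mul_eq hvw hr').mp hr, (pos_iff_of_mul_eq hvw hs').mp hs⟩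
  · have hr' := div_mul_cancel₀ (𝓐 c v) hvw
    have hs' := div_mul_cancel₀ (𝓐 c w) hvw
    exact ⟨_, _, (pos_iff_of_mul_eq hvw hr').mpr hr, (pos_iff_of_mul_eq hvw hs').mpr hs,
      (mul_eq_mul_add_iff_areaForm hvw).mpr ⟨hr', hs'⟩⟩

lemma rayCrossing_polar {ρ : ℝ} (hρ : 0 < ρ) (γ ω θ : ℝ) :
    rayCrossing (ρ * exp (γ * I)) (exp (ω * I)) (exp (θ * I)) =
      if Real.sin (ω - θ) * Real.sin (γ - θ) < 0 ∧ 0 < Real.sin (ω - θ) * Real.sin (ω - γ)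
        then Real.sign (Real.sin (ω - θ)) else 0 := by
  have hscale (z : ℂ) : 𝓐 (ρ * exp (γ * I)) z = ρ * 𝓐 (exp (γ * I)) z := by
    rw [← real_smul, map_smul, LinearMap.smul_apply, smul_eq_mul]
  simp only [rayCrossing_eq_ite_areaForm, hscale, mul_left_comm _ ρ, mul_pos_iff_of_pos_left hρ,
    areaForm_exp_exp]
  simp only [← neg_sub γ θ, Real.sin_neg, mul_neg, neg_pos]

lemma sin_nonpos_of_mem_Icc_pi_two_pi {x : ℝ} (hx : x ∈ Icc π (2 * π)) : Real.sin x ≤ 0 := by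
  rw [← Real.sin_sub_two_pi]
  exact Real.sin_nonpos_of_nonpos_of_neg_pi_le (by linarith [hx.2]) (by linarith [hx.1])

lemma mul_sin_sub_nonpos_of_sin_mul_sin_neg {x y : ℝ} (hx : x ∈ Icc 0 (2 * π))
    (hy : y ∈ Icc 0 (2 * π)) (hxy : |y - x| ≤ π) (hneg : Real.sin y * Real.sin x < 0) :
    Real.sin y * Real.sin (y - x) ≤ 0 := by
  obtain ⟨hxy₀, hxy₁⟩ := abs_le.mp hxy
  rcases le_total x π with hxπ | hxπ <;> rcases le_total y π with hyπ | hyπ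
  · exact absurd (mul_nonneg (Real.sin_nonneg_of_nonneg_of_le_pi hy.1 hyπ)
      (Real.sin_nonneg_of_nonneg_of_le_pi hx.1 hxπ)) hneg.not_ge
  · exact mul_nonpos_of_nonpos_of_nonneg (sin_nonpos_of_mem_Icc_pi_two_pi ⟨hyπ, hy.2⟩)
      (Real.sin_nonneg_of_nonneg_of_le_pi (by linarith) hxy₁)
  · exact mul_nonpos_of_nonneg_of_nonpos (Real.sin_nonneg_of_nonneg_of_le_pi hy.1 hyπ)
      (Real.sin_nonpos_of_nonpos_of_neg_pi_le (by linarith) hxy₀)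
  · exact absurd (mul_nonneg_of_nonpos_of_nonpos (sin_nonpos_of_mem_Icc_pi_two_pi ⟨hyπ, hy.2⟩)
      (sin_nonpos_of_mem_Icc_pi_two_pi ⟨hxπ, hx.2⟩)) hneg.not_ge

lemma floor_div_two_pi_eq {x : ℝ} {n : ℤ} (h : x ∈ Ico (n * (2 * π)) ((n + 1) * (2 * π))) :
    ⌊x / (2 * π)⌋ = n := by
  rwa [Int.floor_eq_iff, le_div_iff₀ Real.two_pi_pos, div_lt_iff₀ Real.two_pi_pos]

lemma ite_sin_eq_floor_of_mem_Ioo {x y : ℝ} (hx : x ∈ Ioo 0 (2 * π)) (hxy : |y - x| < π)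
    (hy₀ : y ≠ 0) (hy₁ : y ≠ 2 * π) :
    (if Real.sin y * Real.sin x < 0 ∧ 0 < Real.sin y * Real.sin (y - x)
        then Real.sign (Real.sin y) else 0) = ⌊y / (2 * π)⌋ := by
  obtain ⟨hx₀, hx₁⟩ := hx
  obtain ⟨hxy₀, hxy₁⟩ := abs_lt.mp hxy
  rcases lt_or_gt_of_ne hy₀ with hy | hy
  · have hfloor : ⌊y / (2 * π)⌋ = -1 :=
      floor_div_two_pi_eq (by constructor <;> push_cast <;> linarith)
    have hsin_y := Real.sin_neg_of_neg_of_neg_pi_lt hy (by linarith)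
    have hsin_x := Real.sin_pos_of_pos_of_lt_pi hx₀ (by linarith)
    have hsin_sub := Real.sin_neg_of_neg_of_neg_pi_lt (x := y - x) (by linarith) hxy₀
    rw [if_pos ⟨mul_neg_of_neg_of_pos hsin_y hsin_x, mul_pos_of_neg_of_neg hsin_y hsin_sub⟩,
      Real.sign_of_neg hsin_y, hfloor]
    norm_num
  rcases lt_or_gt_of_ne hy₁ with hy' | hy'
  · have hfloor : ⌊y / (2 * π)⌋ = 0 :=
      floor_div_two_pi_eq (by constructor <;> push_cast <;> linarith)
    rw [hfloor, Int.cast_zero, if_neg]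
    rintro ⟨hneg, hpos⟩
    exact (mul_sin_sub_nonpos_of_sin_mul_sin_neg ⟨hx₀.le, hx₁.le⟩ ⟨hy.le, hy'.le⟩ hxy.le
      hneg).not_gt hpos
  · have hfloor : ⌊y / (2 * π)⌋ = 1 :=
      floor_div_two_pi_eq (by constructor <;> push_cast <;> linarith)
    have hsin_y : 0 < Real.sin y := by
      rw [← Real.sin_sub_two_pi]
      exact Real.sin_pos_of_pos_of_lt_pi (by linarith) (by linarith)
    have hsin_x : Real.sin x < 0 := by
      rw [← Real.sin_sub_two_pi]
      exact Real.sin_neg_of_neg_of_neg_pi_lt (by linarith) (by linarith)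
    have hsin_sub := Real.sin_pos_of_pos_of_lt_pi (x := y - x) (by linarith) hxy₁
    rw [if_pos ⟨mul_neg_of_pos_of_neg hsin_y hsin_x, mul_pos hsin_y hsin_sub⟩,
      Real.sign_of_pos hsin_y, hfloor]
    norm_num

lemma ite_sin_eq_floor_sub_floor {x y : ℝ} (hxy : |y - x| < π)
    (hx : ∀ n : ℤ, x ≠ n * (2 * π)) (hy : ∀ n : ℤ, y ≠ n * (2 * π)) :
    (if Real.sin y * Real.sin x < 0 ∧ 0 < Real.sin y * Real.sin (y - x)
        then Real.sign (Real.sin y) else 0) = (⌊y / (2 * π)⌋ : ℝ) - ⌊x / (2 * π)⌋ := by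
  set n := ⌊x / (2 * π)⌋
  have hπ : 0 < 2 * π := Real.two_pi_pos
  have hx₀ : n * (2 * π) ≤ x := (le_div_iff₀ hπ).mp (Int.floor_le _)
  have hx₁ : x < (n + 1) * (2 * π) := (div_lt_iff₀ hπ).mp (Int.lt_floor_add_one _)
  have hreduced := ite_sin_eq_floor_of_mem_Ioo (x := x - n * (2 * π)) (y := y - n * (2 * π))
    ⟨sub_pos.mpr (hx₀.lt_of_ne' (hx n)), by linarith⟩ (by rwa [sub_sub_sub_cancel_right])
    (sub_ne_zero.mpr (hy n)) (fun h => hy (n + 1) (by push_cast; linarith))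
  rwa [sub_sub_sub_cancel_right, Real.sin_sub_int_mul_two_pi, Real.sin_sub_int_mul_two_pi,
    sub_div, mul_div_cancel_right₀ _ hπ.ne', Int.floor_sub_intCast, Int.cast_sub] at hreduced

lemma ne_int_mul_two_pi_of_exp_ne {x y : ℝ} (h : exp (x * I) ≠ exp (y * I)) (n : ℤ) :
    x - y ≠ n * (2 * π) := by
  intro hn
  refine h (exp_eq_exp_iff_exists_int.mpr ⟨n, ?_⟩)
  rw [sub_eq_iff_eq_add.mp hn]
  push_cast
  ring

lemma rayCrossing_eq_floor_sub_floor {c : ℂ} {ω θ : ℝ} (hω : |ω - arg c| < π)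
    (hc : c ∉ ray (exp (θ * I))) (hωθ : exp (ω * I) ≠ exp (θ * I)) :
    rayCrossing c (exp (ω * I)) (exp (θ * I)) =
      (⌊(ω - θ) / (2 * π)⌋ : ℝ) - ⌊(arg c - θ) / (2 * π)⌋ := by
  have hpolar : ‖c‖ * exp (arg c * I) = c := norm_mul_exp_arg_mul_I c
  have hnorm : 0 < ‖c‖ := norm_pos_iff.mpr (by rintro rfl; exact hc (zero_mem_ray _))
  have harg : exp (arg c * I) ≠ exp (θ * I) := fun h =>
    hc ⟨‖c‖, hnorm.le, by rw [← h, hpolar]⟩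
  have hcrossing := rayCrossing_polar hnorm (arg c) ω θ
  rw [hpolar] at hcrossing
  rw [hcrossing, ← ite_sin_eq_floor_sub_floor (by rwa [sub_sub_sub_cancel_right])
    (ne_int_mul_two_pi_of_exp_ne harg) (ne_int_mul_two_pi_of_exp_ne hωθ), sub_sub_sub_cancel_right]

/-- For `0 ≤ θ`, the number of points of `2πℤ` in `(x - θ, x + θ]`. If moreover `θ ≤ π`, this is up
to boundary cases the indicator function of the sector `|arg z| < θ` at `z = e^{ix}`. -/
noncomputable def arcCount (θ x : ℝ) : ℤ :=
  ⌊(x + θ) / (2 * π)⌋ - ⌊(x - θ) / (2 * π)⌋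

lemma rayCrossing_exp_sub_rayCrossing_exp_inv {c : ℂ} {ω θ : ℝ} (hω : |ω - arg c| < π)
    (hc : c ∉ ray (exp (θ * I))) (hc' : c ∉ ray (exp (θ * I))⁻¹)
    (hωθ : exp (ω * I) ≠ exp (θ * I)) (hωθ' : exp (ω * I) ≠ (exp (θ * I))⁻¹) :
    rayCrossing c (exp (ω * I)) (exp (θ * I)) - rayCrossing c (exp (ω * I)) (exp (θ * I))⁻¹ =
      arcCount θ (arg c) - arcCount θ ω := by
  have hinv : (exp (θ * I))⁻¹ = exp ((-θ : ℝ) * I) := by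
    rw [← exp_neg, ofReal_neg, neg_mul]
  rw [hinv] at hc' hωθ' ⊢
  rw [rayCrossing_eq_floor_sub_floor hω hc hωθ, rayCrossing_eq_floor_sub_floor hω hc' hωθ']
  simp only [arcCount, sub_neg_eq_add, Int.cast_sub]
  ring

lemma floor_add_half_div_natCast (n : ℤ) (m : ℕ) : ⌊((n : ℝ) + 1 / 2) / m⌋ = n / m := by
  rw [Int.floor_div_natCast, Int.floor_intCast_add]
  norm_num

lemma ediv_sub_sub_one_ediv {m : ℤ} (hm : 0 < m) (n : ℤ) :
    n / m - (n - 1) / m = if m ∣ n then 1 else 0 := by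
  split_ifs with hdvd
  · obtain ⟨k, rfl⟩ := hdvd
    rw [sub_eq_neg_add _ (1 : ℤ), Int.add_mul_ediv_left _ _ hm.ne',
      Int.mul_ediv_cancel_left k hm.ne', Int.neg_one_ediv, Int.sign_eq_one_of_pos hm]
    ring
  · have hmod := (Int.emod_pos_of_not_dvd hdvd).resolve_left hm.ne'
    have hlt := Int.emod_lt_of_pos n hm
    have hdivmod := Int.mul_ediv_add_emod n m
    rw [sub_eq_zero, eq_comm, Int.ediv_eq_iff_of_pos hm]
    constructor <;> linarith

lemma arcCount_pi_div_two_pi_mul_div {m : ℕ} (hm : 0 < m) (n : ℤ) :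
    arcCount (π / m) (n * (2 * π) / m) = if (m : ℤ) ∣ n then 1 else 0 := by
  have hadd : (n * (2 * π) / m + π / m) / (2 * π) = (n + 1 / 2) / m := by field_simp
  have hsub : (n * (2 * π) / m - π / m) / (2 * π) = ((n - 1 : ℤ) + 1 / 2) / m := by
    push_cast
    field_simp
    ring
  rw [arcCount, hadd, hsub, floor_add_half_div_natCast, floor_add_half_div_natCast,
    ediv_sub_sub_one_ediv (by exact_mod_cast hm)]

lemma arcCount_pi_div_of_pow_eq_one {m : ℕ} (hm : 0 < m) {x : ℝ} (hx : exp (x * I) ^ m = 1) :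
    arcCount (π / m) x = if exp (x * I) = 1 then 1 else 0 := by
  have hm' : (m : ℝ) ≠ 0 := by positivity
  have hexp (y : ℝ) : exp (y * I) = 1 ↔ ∃ n : ℤ, y = n * (2 * π) := by
    simp only [exp_eq_one_iff, ← mul_assoc, mul_left_inj' I_ne_zero]
    norm_cast
  obtain ⟨n, hn⟩ := (hexp (m * x)).mp (by rw [← hx, ← exp_nat_mul]; push_cast; ring_nf)
  obtain rfl : x = n * (2 * π) / m := by rw [← hn, mul_div_cancel_left₀ x hm']
  rw [arcCount_pi_div_two_pi_mul_div hm]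
  refine if_congr ?_ rfl rfl
  rw [hexp]
  refine exists_congr fun k => ?_
  rw [div_eq_iff hm', mul_right_comm, mul_left_inj' Real.two_pi_pos.ne', mul_comm (k : ℝ)]
  norm_cast

lemma exists_exp_mul_I_eq_and_abs_sub_arg_lt_pi {c w : ℂ} (hw : ‖w‖ = 1)
    (hcw : ∀ r : ℝ, 0 ≤ r → r * w + c ≠ 0) :
    ∃ ω : ℝ, exp (ω * I) = w ∧ |ω - arg c| < π := by
  have hc : c ≠ 0 := by simpa using hcw 0 le_rfl
  have hnorm : (‖c‖ : ℂ) * ‖w / c‖ = 1 := by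
    rw [← ofReal_mul, ← norm_mul, mul_div_cancel₀ w hc, hw, ofReal_one]
  refine ⟨arg c + arg (w / c), ?_, ?_⟩
  · calc exp ((arg c + arg (w / c) : ℝ) * I)
        = (‖c‖ * ‖w / c‖) * (exp (arg c * I) * exp (arg (w / c) * I)) := by
          rw [hnorm, one_mul, ← exp_add, ofReal_add, add_mul]
      _ = (‖c‖ * exp (arg c * I)) * (‖w / c‖ * exp (arg (w / c) * I)) := mul_mul_mul_comm ..
      _ = w := by
          rw [norm_mul_exp_arg_mul_I, norm_mul_exp_arg_mul_I, mul_div_cancel₀ w hc]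
  · rw [add_sub_cancel_left, abs_lt]
    refine ⟨neg_pi_lt_arg _, (arg_le_pi _).lt_of_ne fun harg => hcw ‖c‖ (norm_nonneg c) ?_⟩
    have hopposite : w / c = -‖w / c‖ := by
      simpa [harg] using (norm_mul_exp_arg_mul_I (w / c)).symm
    rw [(div_eq_iff hc).mp hopposite]
    linear_combination -c * hnorm

lemma exp_pi_div_mul_I_pow {m : ℕ} (hm : m ≠ 0) : exp ((π / m : ℝ) * I) ^ m = -1 := by
  rw [← exp_nat_mul, ofReal_div, ofReal_natCast, ← mul_assoc,
    mul_div_cancel₀ _ (Nat.cast_ne_zero.mpr hm), exp_pi_mul_I]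

lemma rayCrossing_sub_rayCrossing_inv_of_pow_eq_one {m : ℕ} (hm : 0 < m) {c w η : ℂ}
    (hη : η = exp ((π / m : ℝ) * I)) (hc : c ∉ ray η) (hc' : c ∉ ray η⁻¹) (hw : w ^ m = 1)
    (hcw : ∀ r : ℝ, 0 ≤ r → r * w + c ≠ 0) :
    rayCrossing c w η - rayCrossing c w η⁻¹ =
      arcCount (π / m) (arg c) - if w = 1 then 1 else 0 := by
  subst hη
  have hpow := exp_pi_div_mul_I_pow hm.ne'
  have hpow' : (exp ((π / m : ℝ) * I))⁻¹ ^ m = -1 := by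
    rw [inv_pow, hpow, inv_neg_one]
  obtain ⟨ω, rfl, hω⟩ := exists_exp_mul_I_eq_and_abs_sub_arg_lt_pi
    (norm_eq_one_of_pow_eq_one hw hm.ne') hcw
  have hne {v : ℂ} (hv : v ^ m = -1) : exp (ω * I) ≠ v := by
    rintro rfl
    norm_num [hv] at hw
  rw [rayCrossing_exp_sub_rayCrossing_exp_inv hω hc hc' (hne hpow) (hne hpow'),
    arcCount_pi_div_of_pow_eq_one hm hw]
  push_cast
  rfl

/-- The intersection of the line `z' = βz + c` with the product of the open rays through `u`
and `v`. -/
def lineInterOpenRays (β c u v : ℂ) : Set (ℂ × ℂ) :=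
  {p | p.2 = β * p.1 + c ∧ p.1 ∈ openRay u ∧ p.2 ∈ openRay v}

lemma lineInterOpenRays_nonempty_iff {β c u v : ℂ} :
    (lineInterOpenRays β c u v).Nonempty ↔
      ∃ r s : ℝ, 0 < r ∧ 0 < s ∧ (s : ℂ) * v = r * (β * u) + c := by
  constructor
  · rintro ⟨⟨_, _⟩, h, ⟨r, hr, rfl⟩, s, hs, rfl⟩
    exact ⟨r, s, hr, hs, h.trans (by rw [mul_left_comm])⟩
  · rintro ⟨r, s, hr, hs, h⟩
    exact ⟨(r * u, s * v), by rw [h, mul_left_comm], ⟨r, hr, rfl⟩, s, hs, rfl⟩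

lemma lineInterOpenRays_subsingleton {β c u v : ℂ} (h : 𝓐 v (β * u) ≠ 0) :
    (lineInterOpenRays β c u v).Subsingleton := by
  rintro ⟨_, _⟩ ⟨hp, ⟨r, -, rfl⟩, s, -, rfl⟩ ⟨_, _⟩ ⟨hp', ⟨r', -, rfl⟩, s', -, rfl⟩
  simp only [mul_left_comm β] at hp hp'
  obtain ⟨hr, hs⟩ := (mul_eq_mul_add_iff_areaForm h).mp hp
  obtain ⟨hr', hs'⟩ := (mul_eq_mul_add_iff_areaForm h).mp hp'
  rw [mul_right_cancel₀ h (hr.trans hr'.symm), mul_right_cancel₀ h (hs.trans hs'.symm)]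

lemma finsum_mem_lineInterOpenRays {β c u v : ℂ} {f : ℂ × ℂ → ℝ} {k : ℝ}
    (hf : ∀ p ∈ lineInterOpenRays β c u v, f p = k * Real.sign (𝓐 v (β * u))) :
    ∑ᶠ p ∈ lineInterOpenRays β c u v, f p = k * rayCrossing c (β * u) v := by
  rw [finsum_mem_congr rfl hf, rayCrossing, ← lineInterOpenRays_nonempty_iff]
  by_cases hparallel : 𝓐 v (β * u) = 0
  · simp [hparallel]
  rcases (lineInterOpenRays_subsingleton (c := c) hparallel).eq_empty_or_singleton with h | ⟨p, h⟩
  · simp [h]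
  · rw [h, finsum_mem_singleton, if_pos (singleton_nonempty p)]

/-- The intersection of the line `z' = βz + c` with `W × W`, where `W` is the union of the rays
through the `u i`. -/
def lineInterRays {ι : Type*} (β c : ℂ) (u : ι → ℂ) : Set (ℂ × ℂ) :=
  {p | p.2 = β * p.1 + c ∧ p.1 ∈ (⋃ i, ray (u i)) ∧ p.2 ∈ ⋃ i, ray (u i)}

section LineInterRays

variable {ι : Type*} {β c : ℂ} {u : ι → ℂ}

lemma notMem_ray_of_forall_mem_lineInterRays
    (h : ∀ p ∈ lineInterRays β c u, p.1 ≠ 0 ∧ p.2 ≠ 0) (i : ι) : c ∉ ray (u i) := fun hc =>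
  (h (0, c) ⟨by simp, mem_iUnion_of_mem i (zero_mem_ray _), mem_iUnion_of_mem i hc⟩).1 rfl

lemma mul_add_ne_zero_of_forall_mem_lineInterRays
    (h : ∀ p ∈ lineInterRays β c u, p.1 ≠ 0 ∧ p.2 ≠ 0) (i : ι) {r : ℝ} (hr : 0 ≤ r) :
    r * (β * u i) + c ≠ 0 := fun h₀ =>
  (h (r * u i, 0) ⟨by rw [mul_left_comm, h₀], mem_iUnion_of_mem i ⟨r, hr, rfl⟩,
    mem_iUnion_of_mem i (zero_mem_ray _)⟩).2 rfl

lemma lineInterRays_eq_iUnion (h : ∀ p ∈ lineInterRays β c u, p.1 ≠ 0 ∧ p.2 ≠ 0) :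
    lineInterRays β c u = ⋃ i, ⋃ j, lineInterOpenRays β c (u i) (u j) := by
  ext p
  simp only [mem_iUnion]
  constructor
  · intro hp
    obtain ⟨i, hi⟩ := mem_iUnion.mp hp.2.1
    obtain ⟨j, hj⟩ := mem_iUnion.mp hp.2.2
    exact ⟨i, j, hp.1, mem_openRay_of_mem_ray hi (h p hp).1, mem_openRay_of_mem_ray hj (h p hp).2⟩
  · rintro ⟨i, j, hline, hi, hj⟩
    exact ⟨hline, mem_iUnion_of_mem i (openRay_subset_ray _ hi),
      mem_iUnion_of_mem j (openRay_subset_ray _ hj)⟩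

lemma finsum_mem_lineInterRays [Fintype ι]
    (hu : Pairwise (Disjoint on fun i => openRay (u i)))
    (h : ∀ p ∈ lineInterRays β c u, p.1 ≠ 0 ∧ p.2 ≠ 0) (hfin : (lineInterRays β c u).Finite)
    {f : ℂ × ℂ → ℝ} {n : ι → ℝ}
    (hf : ∀ i j, ∀ p, p.1 ∈ openRay (u i) → p.2 ∈ openRay (u j) →
      f p = n i * n j * Real.sign (𝓐 (u j) (β * u i))) :
    ∑ᶠ p ∈ lineInterRays β c u, f p =
      ∑ i, n i * ∑ j, n j * rayCrossing c (β * u i) (u j) := by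
  have hrow (i : ι) : Pairwise (Disjoint on fun j => lineInterOpenRays β c (u i) (u j)) :=
    fun j j' hj => Set.disjoint_left.mpr fun _ hp hp' =>
      Set.disjoint_left.mp (hu hj) hp.2.2 hp'.2.2
  have hrows : Pairwise (Disjoint on fun i => ⋃ j, lineInterOpenRays β c (u i) (u j)) := by
    intro i i' hi
    simp only [onFun, disjoint_iUnion_left, disjoint_iUnion_right]
    intro j j'
    rw [Set.disjoint_left]
    exact fun _ hp hp' => Set.disjoint_left.mp (hu hi) hp.2.1 hp'.2.1
  rw [lineInterRays_eq_iUnion h] at hfin ⊢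
  have hfin_row (i : ι) := hfin.subset (subset_iUnion _ i)
  rw [finsum_mem_iUnion hrows hfin_row, finsum_eq_sum_of_fintype]
  refine Finset.sum_congr rfl fun i _ => ?_
  have hfin_piece (j : ι) := (hfin_row i).subset
    (subset_iUnion (fun j => lineInterOpenRays β c (u i) (u j)) j)
  rw [finsum_mem_iUnion (hrow i) hfin_piece,
    finsum_eq_sum_of_fintype, Finset.mul_sum]
  refine Finset.sum_congr rfl fun j _ => ?_
  rw [finsum_mem_lineInterOpenRays fun p hp => hf i j p hp.2.1 hp.2.2, mul_assoc]

end LineInterRays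

lemma sum_sum_rayCrossing_of_pow_eq_neg_one {m : ℕ} (hm : 0 < m) {β c η : ℂ}
    (hη : η = exp ((π / m : ℝ) * I)) (hβ : β ^ m = -1)
    (h : ∀ p ∈ lineInterRays β c ![η, η⁻¹], p.1 ≠ 0 ∧ p.2 ≠ 0) :
    ∑ i, ![1, -1] i * ∑ j, ![1, -1] j * rayCrossing c (β * ![η, η⁻¹] i) (![η, η⁻¹] j) =
      (if β = η then 1 else 0) - if β = η⁻¹ then 1 else 0 := by
  have hpow : η ^ m = -1 := by rw [hη, exp_pi_div_mul_I_pow hm.ne']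
  have hη₀ : η ≠ 0 := by rw [hη]; exact exp_ne_zero _
  have hcrossing {w : ℂ} := rayCrossing_sub_rayCrossing_inv_of_pow_eq_one (w := w) hm hη
    (notMem_ray_of_forall_mem_lineInterRays h 0) (notMem_ray_of_forall_mem_lineInterRays h 1)
  have hcrossing₀ := hcrossing (w := β * η) (by rw [mul_pow, hβ, hpow, neg_one_mul, neg_neg])
    fun _ => mul_add_ne_zero_of_forall_mem_lineInterRays h 0
  have hcrossing₁ := hcrossing (w := β * η⁻¹)
    (by rw [mul_pow, inv_pow, hβ, hpow, inv_neg_one, neg_one_mul, neg_neg])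
    fun _ => mul_add_ne_zero_of_forall_mem_lineInterRays h 1
  simp only [mul_eq_one_iff_eq_inv₀ hη₀, mul_inv_eq_one₀ hη₀] at hcrossing₀ hcrossing₁
  simp only [Fin.sum_univ_two, Matrix.cons_val_zero, Matrix.cons_val_one]
  linear_combination hcrossing₀ - hcrossing₁

lemma det_line_rays_eq_areaForm (β u v : ℂ) :
    Matrix.det
      !![1, 0, β.re, β.im;
         0, 1, -β.im, β.re;
         u.re, u.im, 0, 0;
         0, 0, v.re, v.im] = 𝓐 v (β * u) := by
  rw [areaForm_eq, mul_re, mul_im]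
  simp [Matrix.det_succ_row_zero, Fin.sum_univ_succ, Fin.succAbove]
  ring

end

/-- Let `η = e^{πi/m}` and let `W = W(π/m)` be the chain `H(π/m) - H(-π/m)` in `ℂ`, where
`H(θ)` is the ray `ℝ_{≥0}·e^{iθ}` oriented away from the origin. For `β` with `β^m = -1`, the
local intersection number at the origin of the `2`-chain `W(π/m) × W(π/m)` with the line
`Λ_β = {z' = βz}` equals `1` if `β = η`, `-1` if `β = η⁻¹`, and `0` otherwise: for every small
generic translation `Λ_β + (0,c)`, the signed (by orientations) count of the transverse
intersection points equals this value. -/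
theorem stmt_17 (m : ℕ) (hm : 2 ≤ m) (β : ℂ) (hβ : β ^ m = -1) :
    let η : ℂ := Complex.exp ((Real.pi : ℂ) * Complex.I / (m : ℂ))
    let Hray : ℂ → Set ℂ := fun u => {z | ∃ r : ℝ, 0 ≤ r ∧ z = (r : ℂ) * u}
    let W : Set ℂ := Hray η ∪ Hray η⁻¹
    let dir : ℂ → ℂ := fun z => if z ∈ Hray η then η else η⁻¹
    let sgn : ℂ → ℝ := fun z => if z ∈ Hray η then 1 else -1
    let wt : ℂ × ℂ → ℝ := fun p =>
      sgn p.1 * sgn p.2 *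
        Real.sign
          (Matrix.det
            !![1, 0, β.re, β.im;
               0, 1, -β.im, β.re;
               (dir p.1).re, (dir p.1).im, 0, 0;
               0, 0, (dir p.2).re, (dir p.2).im])
    ∃ ε₀ > (0 : ℝ), ∀ c : ℂ, 0 < ‖c‖ → ‖c‖ < ε₀ →
      ∀ T : Set (ℂ × ℂ), T = {p | p.2 = β * p.1 + c ∧ p.1 ∈ W ∧ p.2 ∈ W} →
        T.Finite → (∀ p ∈ T, p.1 ≠ 0 ∧ p.2 ≠ 0) →
        ∑ᶠ p ∈ T, wt p = if β = η then 1 else if β = η⁻¹ then -1 else 0 := by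
  intro η Hray W dir sgn wt
  refine ⟨1, one_pos, fun c _ _ T hT hfin hgen => ?_⟩
  have hη : η = Complex.exp ((Real.pi / m : ℝ) * Complex.I) := by
    simp only [η]
    push_cast
    ring_nf
  have hdisj : Disjoint (ray η) (openRay η⁻¹) := by
    rw [hη]
    refine disjoint_ray_exp_openRay_inv (Real.sin_pos_of_pos_of_lt_pi (by positivity) ?_)
    exact div_lt_self Real.pi_pos (by exact_mod_cast hm)
  have hT' : T = lineInterRays β c ![η, η⁻¹] := by
    simp only [hT, lineInterRays, Set.mem_iUnion, Fin.exists_fin_two]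
    rfl
  rw [hT'] at hfin hgen ⊢
  rw [finsum_mem_lineInterRays (n := ![1, -1]) (pairwise_disjoint_openRay_vecCons hdisj) hgen hfin]
  · have hne : η ≠ η⁻¹ := fun h =>
      Set.disjoint_left.mp hdisj ⟨1, zero_le_one, by simp [← h]⟩ ⟨1, one_pos, (one_mul _).symm⟩
    rw [sum_sum_rayCrossing_of_pow_eq_neg_one (by lia) hη hβ hgen]
    grind
  · intro i j p hi hj
    have hdir {z : ℂ} {k : Fin 2} (hz : z ∈ openRay (![η, η⁻¹] k)) : dir z = ![η, η⁻¹] k :=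
      ite_mem_ray_eq_vecCons hdisj hz _ _
    have hsgn {z : ℂ} {k : Fin 2} (hz : z ∈ openRay (![η, η⁻¹] k)) : sgn z = ![1, -1] k :=
      ite_mem_ray_eq_vecCons hdisj hz _ _
    simp only [wt, hdir hi, hdir hj, hsgn hi, hsgn hj, det_line_rays_eq_areaForm]
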